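/- Suppose Γ is a configuration satisfying the Working Conditions with at least one bad vertex, let φ be an embedding of Γ into ℤ^N, let x be a bad vertex with adjusted weight w'(x) = 0, and suppose the restriction of φ to the vertices of the extended bad part is either standard or semi-standard at some bad vertex different from x. If v is a vertex with v ≠ x and supp(φ(v)) ∩ supp(φ(x)) ≠ ∅, then v is adjacent to x. -/

import Mathlib

namespace LensPaper

/-- A finite weighted simple graph: the combinatorial data underlying a configuration
(a disjoint union of weighted linear graphs).  The fact that every connected component
is a path is recorded separately by `Config.IsLinear`. -/
structure Config where
  V : Type
  fin : Fintype V
  deq : DecidableEq V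
  graph : SimpleGraph V
  adjDec : DecidableRel graph.Adj
  w : V → ℤ

attribute [instance] Config.fin Config.deq Config.adjDec

namespace Config

/-- The degree of a vertex. -/
noncomputable def deg (C : Config) (v : C.V) : ℕ := (C.graph.neighborSet v).ncard

/-- A configuration: every component is a path, i.e. all degrees are at most `2` and the
graph is acyclic. -/
def IsLinear (C : Config) : Prop :=
  (∀ v : C.V, C.deg v ≤ 2) ∧ C.graph.IsAcyclic

/-- The adjusted weight `w'(v) = w(v) - deg(v)`. -/
noncomputable def adjw (C : Config) (v : C.V) : ℤ := C.w v - C.deg v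

/-- A vertex is bad if it is adjacent to two distinct vertices of positive adjusted
weight. -/
def IsBad (C : Config) (x : C.V) : Prop :=
  ∃ u v : C.V, u ≠ v ∧ C.graph.Adj x u ∧ C.graph.Adj x v ∧ 0 < C.adjw u ∧ 0 < C.adjw v

/-- A leaf: a vertex of degree at most one. -/
def IsLeaf (C : Config) (v : C.V) : Prop := C.deg v ≤ 1

/-- `v 0, v 1, …, v m` is a chain of consecutive (distinct) vertices. -/
def IsChain (C : Config) (m : ℕ) (v : ℕ → C.V) : Prop :=
  (∀ i ≤ m, ∀ j ≤ m, v i = v j → i = j) ∧ ∀ i < m, C.graph.Adj (v i) (v (i + 1))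

/-- The chain `v 0, …, v m` has the list `p` as its sequence of adjusted weights. -/
def ChainPattern (C : Config) (m : ℕ) (v : ℕ → C.V) (p : List ℤ) : Prop :=
  C.IsChain m v ∧ m + 1 = p.length ∧ ∀ i : Fin p.length, C.adjw (v i) = p.get i

/-- `Γ` contains a chain of consecutive vertices whose adjusted weights, read in order,
form the list `p`. -/
def HasPattern (C : Config) (p : List ℤ) : Prop := ∃ m v, C.ChainPattern m v p

/-- A chain realizing a bad-part pattern `p` (each entry of `p` is an adjusted weight
together with a flag marking the bad positions): the chain has the prescribed adjusted
weights, and the bad vertices of the configuration are exactly the vertices of the chain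
in the flagged positions. -/
def IsBadPartChain (C : Config) (p : List (ℤ × Bool)) (m : ℕ) (v : ℕ → C.V) : Prop :=
  C.IsChain m v ∧ m + 1 = p.length ∧
  (∀ i : Fin p.length, C.adjw (v i) = (p.get i).1) ∧
  (∀ x : C.V, C.IsBad x ↔ ∃ i : Fin p.length, (p.get i).2 = true ∧ v i = x)

end Config

/-- The chains of adjusted weights forbidden by Working Condition VI. -/
def forbiddenPatterns : List (List ℤ) :=
  [[1, 0, 0, 2], [1, 0, 0, 3], [1, 0, 0, 0, 3], [1, 1, 0, 0, 1, 2], [3, 1, 0, 0, 1],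
   [1, 0, 1, 2], [1, 0, 1, 3], [1, 1, 0, 2], [1, 1, 0, 1, 1, 2]]

/-- The bad-part patterns of Working Condition VII; `true` marks the bad positions. -/
def badPatterns : List (List (ℤ × Bool)) :=
  [[(1, false), (0, true), (1, false)],
   [(1, false), (0, true), (2, false)],
   [(1, false), (0, true), (3, false)],
   [(1, false), (1, true), (1, false)],
   [(1, false), (1, true), (2, false)],
   [(1, false), (2, true), (1, false)],
   [(1, false), (0, true), (1, false), (0, true), (1, false)],
   [(1, false), (0, true), (1, false), (0, true), (2, false)],
   [(1, false), (0, true), (1, false), (1, true), (1, false)],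
   [(1, false), (0, true), (1, false), (1, true), (2, false)],
   [(1, false), (1, true), (1, true), (1, false)],
   [(1, false), (1, true), (1, true), (1, true), (1, false)],
   [(1, false), (1, true), (2, true), (1, false)]]

namespace Config

/-- The Working Conditions (I)–(VII). -/
def WorkingConditions (C : Config) : Prop :=
  (∀ v : C.V, 2 ≤ C.w v) ∧
  (∀ v : C.V, C.adjw v ≤ 3) ∧
  (∀ u v : C.V, 1 < C.adjw u → 1 < C.adjw v → u = v) ∧
  (∀ v x : C.V, 1 < C.adjw v → C.IsBad x → C.adjw x = 1 → C.graph.Adj x v) ∧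
  ((∃ v : C.V, C.adjw v = 3) →
     ∀ u u' : C.V, C.graph.Adj u u' → C.adjw u = 1 → C.adjw u' = 1 → False) ∧
  (∀ u v x : C.V, C.graph.Adj u v → C.adjw u = 1 → C.adjw v = 1 →
     C.IsBad x → C.adjw x = 2 → C.graph.Adj x u ∨ C.graph.Adj x v) ∧
  (∀ p ∈ forbiddenPatterns, ¬ C.HasPattern p) ∧
  ((∃ x : C.V, C.IsBad x) → ∃ p ∈ badPatterns, ∃ m v, C.IsBadPartChain p m v)

end Config

/-- The standard inner product on `ℤ^N`. -/
def dot {N : ℕ} (x y : Fin N → ℤ) : ℤ := ∑ i, x i * y i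

/-- The support of a vector of `ℤ^N` with respect to the standard orthonormal basis. -/
def supp {N : ℕ} (x : Fin N → ℤ) : Finset (Fin N) :=
  Finset.univ.filter fun i => x i ≠ 0

namespace Config

/-- An embedding of a configuration into `ℤ^N`. -/
def IsEmbedding (C : Config) (N : ℕ) (φ : C.V → Fin N → ℤ) : Prop :=
  ∀ u v : C.V, dot (φ u) (φ v) =
    if u = v then C.w u else if C.graph.Adj u v then -1 else 0

/-- The restriction of `φ` to `S` is standard. -/
def IsStandardOn (C : Config) (N : ℕ) (φ : C.V → Fin N → ℤ) (S : Set C.V) : Prop :=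
  ∀ u ∈ S, ∀ v ∈ S,
    ((supp (φ u) ∩ supp (φ v)).card : ℤ) =
      if u = v then C.w v else if C.graph.Adj u v then 1 else 0

/-- A standard embedding. -/
def IsStandard (C : Config) (N : ℕ) (φ : C.V → Fin N → ℤ) : Prop :=
  C.IsStandardOn N φ Set.univ

/-- The restriction of `φ` to `S` is semi-standard at `x`. -/
def IsSemiStandardAtOn (C : Config) (N : ℕ) (φ : C.V → Fin N → ℤ) (x : C.V)
    (S : Set C.V) : Prop :=
  (∀ u ∈ S, ∀ v ∈ S,
    ((supp (φ u) ∩ supp (φ v)).card : ℤ) =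
      if u = v then C.w v
      else if C.graph.Adj u v then 1
      else if C.graph.Adj x u ∧ C.graph.Adj x v then 2
      else 0) ∧
  (∀ u ∈ S, ∀ v ∈ S, u ≠ v → C.graph.Adj x u → C.graph.Adj x v →
    (supp (φ u) ∩ supp (φ x) ∩ supp (φ v)).card = 1)

/-- A semi-standard embedding: semi-standard at some bad vertex. -/
def IsSemiStandard (C : Config) (N : ℕ) (φ : C.V → Fin N → ℤ) : Prop :=
  ∃ x : C.V, C.IsBad x ∧ C.IsSemiStandardAtOn N φ x Set.univ

/-- A candidate for the extended bad part: a chain containing the bad part whose two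
ends are either leaves or preceded by two consecutive vertices of vanishing adjusted
weight. -/
def IsEBPCand (C : Config) (m : ℕ) (v : ℕ → C.V) : Prop :=
  C.IsChain m v ∧
  (∀ p ∈ badPatterns, ∀ mb vb, C.IsBadPartChain p mb vb →
     ∀ i ≤ mb, ∃ j ≤ m, v j = vb i) ∧
  (C.IsLeaf (v 0) ∨ (2 ≤ m ∧ C.adjw (v 1) = 0 ∧ C.adjw (v 2) = 0)) ∧
  (C.IsLeaf (v m) ∨ (2 ≤ m ∧ C.adjw (v (m - 1)) = 0 ∧ C.adjw (v (m - 2)) = 0))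

/-- The extended bad part: a candidate with the fewest vertices. -/
def IsExtBadPart (C : Config) (m : ℕ) (v : ℕ → C.V) : Prop :=
  C.IsEBPCand m v ∧ ∀ m' v', C.IsEBPCand m' v' → m ≤ m'

/-- The set of vertices of the chain `v 0, …, v m`. -/
def ebpSet (C : Config) (m : ℕ) (v : ℕ → C.V) : Set C.V := {y | ∃ i ≤ m, v i = y}

/-- The outside part of `Γ` relative to the extended bad part `v 0, …, v m`. -/
def OutsidePart (C : Config) (m : ℕ) (v : ℕ → C.V) : Set C.V :=
  {x | ∀ i ≤ m, v i ≠ x}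
  ∪ {x | ¬ C.IsLeaf (v 0) ∧ (x = v 0 ∨ x = v 1 ∨ x = v 2)}
  ∪ {x | ¬ C.IsLeaf (v m) ∧ (x = v m ∨ x = v (m - 1) ∨ x = v (m - 2))}

/-- A screw at the front end of the extended bad part. -/
def IsFrontScrew (C : Config) (N : ℕ) (φ : C.V → Fin N → ℤ) (m : ℕ) (v : ℕ → C.V)
    (e : Fin N) : Prop :=
  ¬ C.IsLeaf (v 0) ∧ 3 ≤ m ∧ φ (v 2) e ≠ 0 ∧ φ (v 3) e ≠ 0

/-- A screw at the back end of the extended bad part. -/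
def IsBackScrew (C : Config) (N : ℕ) (φ : C.V → Fin N → ℤ) (m : ℕ) (v : ℕ → C.V)
    (e : Fin N) : Prop :=
  ¬ C.IsLeaf (v m) ∧ 3 ≤ m ∧ φ (v (m - 2)) e ≠ 0 ∧ φ (v (m - 3)) e ≠ 0

/-- All screws of `Γ` (with respect to `φ`) are clean. -/
def AllScrewsClean (C : Config) (N : ℕ) (φ : C.V → Fin N → ℤ) (m : ℕ)
    (v : ℕ → C.V) : Prop :=
  (∀ e : Fin N, C.IsFrontScrew N φ m v e →
    ∀ u : C.V, u ≠ v 2 → u ≠ v 3 → φ u e = 0) ∧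
  (∀ e : Fin N, C.IsBackScrew N φ m v e →
    ∀ u : C.V, u ≠ v (m - 2) → u ≠ v (m - 3) → φ u e = 0)

end Config


lemma norm_list {N : ℕ} (a : Fin N → ℤ) (l : List (Fin N)) (hl : l.Nodup) :
    (l.map fun i => ((a i).natAbs : ℤ)).sum ≤ dot a a := by
  rw [← List.sum_toFinset _ hl]
  unfold dot
  calc ∑ i ∈ l.toFinset, ((a i).natAbs : ℤ) ≤ ∑ i ∈ l.toFinset, a i * a i := by
        apply Finset.sum_le_sum
        intro i _
        rw [Int.natCast_natAbs]
        rcases abs_cases (a i) with ⟨h, _⟩ | ⟨h, _⟩ <;> rw [h]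
        · nlinarith
        · nlinarith
    _ ≤ ∑ i, a i * a i :=
        Finset.sum_le_sum_of_subset_of_nonneg (Finset.subset_univ _)
          (fun i _ _ => mul_self_nonneg _)

lemma norm1 {N : ℕ} (a : Fin N → ℤ) (i : Fin N) : ((a i).natAbs : ℤ) ≤ dot a a := by
  simpa using norm_list a [i] (by simp)

lemma norm2 {N : ℕ} (a : Fin N → ℤ) {i j : Fin N} (h : i ≠ j) :
    ((a i).natAbs : ℤ) + (a j).natAbs ≤ dot a a := by
  simpa using norm_list a [i, j] (by simp [h])

lemma norm3 {N : ℕ} (a : Fin N → ℤ) {i j k : Fin N} (h : i ≠ j) (h1 : i ≠ k) (h2 : j ≠ k) :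
    ((a i).natAbs : ℤ) + (a j).natAbs + (a k).natAbs ≤ dot a a := by
  have := norm_list a [i, j, k] (by simp [h, h1, h2])
  simp only [List.map_cons, List.map_nil, List.sum_cons, List.sum_nil] at this
  linarith

lemma norm4 {N : ℕ} (a : Fin N → ℤ) {i j k l : Fin N} (h : i ≠ j) (h1 : i ≠ k) (h2 : j ≠ k)
    (h3 : i ≠ l) (h4 : j ≠ l) (h5 : k ≠ l) :
    ((a i).natAbs : ℤ) + (a j).natAbs + (a k).natAbs + (a l).natAbs ≤ dot a a := by
  have := norm_list a [i, j, k, l] (by simp [h, h1, h2, h3, h4, h5])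
  simp only [List.map_cons, List.map_nil, List.sum_cons, List.sum_nil] at this
  linarith

lemma dot_list {N : ℕ} (a b : Fin N → ℤ) (l : List (Fin N)) (hl : l.Nodup)
    (h : ∀ k, k ∉ l → a k * b k = 0) : dot a b = (l.map fun i => a i * b i).sum := by
  rw [← List.sum_toFinset _ hl]
  unfold dot
  symm
  apply Finset.sum_subset (Finset.subset_univ _)
  intro i _ hi
  exact h i (by simpa using hi)

lemma dot1 {N : ℕ} (a b : Fin N → ℤ) (i : Fin N)
    (h : ∀ k, k ≠ i → a k * b k = 0) : dot a b = a i * b i := by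
  have := dot_list a b [i] (by simp) (by intro k hk; apply h; simpa using hk)
  simpa using this

lemma dot2 {N : ℕ} (a b : Fin N → ℤ) {i j : Fin N} (hij : i ≠ j)
    (h : ∀ k, k ≠ i → k ≠ j → a k * b k = 0) : dot a b = a i * b i + a j * b j := by
  have := dot_list a b [i, j] (by simp [hij]) (by intro k hk; simp at hk; exact h k hk.1 hk.2)
  simpa using this

lemma dot3 {N : ℕ} (a b : Fin N → ℤ) {i j k : Fin N} (hij : i ≠ j) (hik : i ≠ k) (hjk : j ≠ k)
    (h : ∀ l, l ≠ i → l ≠ j → l ≠ k → a l * b l = 0) :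
    dot a b = a i * b i + a j * b j + a k * b k := by
  have := dot_list a b [i, j, k] (by simp [hij, hik, hjk])
    (by intro l hk; simp at hk; exact h l hk.1 hk.2.1 hk.2.2)
  simp only [List.map_cons, List.map_nil, List.sum_cons, List.sum_nil] at this
  linarith

lemma dot4 {N : ℕ} (a b : Fin N → ℤ) {i j k m : Fin N} (hij : i ≠ j) (hik : i ≠ k) (hjk : j ≠ k)
    (h1 : i ≠ m) (h2 : j ≠ m) (h3 : k ≠ m)
    (h : ∀ l, l ≠ i → l ≠ j → l ≠ k → l ≠ m → a l * b l = 0) :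
    dot a b = a i * b i + a j * b j + a k * b k + a m * b m := by
  have := dot_list a b [i, j, k, m] (by simp [hij, hik, hjk, h1, h2, h3])
    (by intro l hk; simp at hk; exact h l hk.1 hk.2.1 hk.2.2.1 hk.2.2.2)
  simp only [List.map_cons, List.map_nil, List.sum_cons, List.sum_nil] at this
  linarith

lemma dot5 {N : ℕ} (a b : Fin N → ℤ) {i j k m n : Fin N} (hij : i ≠ j) (hik : i ≠ k) (hjk : j ≠ k)
    (h1 : i ≠ m) (h2 : j ≠ m) (h3 : k ≠ m) (g1 : i ≠ n) (g2 : j ≠ n) (g3 : k ≠ n) (g4 : m ≠ n)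
    (h : ∀ l, l ≠ i → l ≠ j → l ≠ k → l ≠ m → l ≠ n → a l * b l = 0) :
    dot a b = a i * b i + a j * b j + a k * b k + a m * b m + a n * b n := by
  have := dot_list a b [i, j, k, m, n] (by simp [hij, hik, hjk, h1, h2, h3, g1, g2, g3, g4])
    (by intro l hk; simp at hk; exact h l hk.1 hk.2.1 hk.2.2.1 hk.2.2.2.1 hk.2.2.2.2)
  simp only [List.map_cons, List.map_nil, List.sum_cons, List.sum_nil] at this
  linarith

lemma dot_comm' {N : ℕ} (a b : Fin N → ℤ) : dot a b = dot b a := by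
  unfold dot; simp only [mul_comm]

namespace Config

lemma no3 {C : Config} (h : C.IsLinear) {a b c : C.V} (h1 : C.graph.Adj a b)
    (h2 : C.graph.Adj b c) (h3 : C.graph.Adj c a) : False := by
  refine h.2 (SimpleGraph.Walk.cons h1 (.cons h2 (.cons h3 .nil))) ?_
  have := h1.ne; have := h2.ne; have := h3.ne
  rw [SimpleGraph.Walk.cons_isCycle_iff]
  simp [SimpleGraph.Walk.cons_isPath_iff]
  grind

lemma no4 {C : Config} (h : C.IsLinear) {a b c d : C.V} (h1 : C.graph.Adj a b)
    (h2 : C.graph.Adj b c) (h3 : C.graph.Adj c d) (h4 : C.graph.Adj d a) (hac : a ≠ c)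
    (hbd : b ≠ d) : False := by
  refine h.2 (SimpleGraph.Walk.cons h1 (.cons h2 (.cons h3 (.cons h4 .nil)))) ?_
  have := h1.ne; have := h2.ne; have := h3.ne; have := h4.ne
  rw [SimpleGraph.Walk.cons_isCycle_iff]
  simp [SimpleGraph.Walk.cons_isPath_iff]
  grind

lemma no5 {C : Config} (h : C.IsLinear) {a b c d e : C.V} (h1 : C.graph.Adj a b)
    (h2 : C.graph.Adj b c) (h3 : C.graph.Adj c d) (h4 : C.graph.Adj d e) (h5 : C.graph.Adj e a) :
    False := by
  by_cases hac : a = c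
  · subst hac; exact no3 h h3 h4 h5
  by_cases had : a = d
  · subst had; exact no3 h h1 h2 h3
  by_cases hbd : b = d
  · subst hbd; exact no3 h h1 h4 h5
  by_cases hbe : b = e
  · subst hbe; exact no3 h h2 h3 h4
  by_cases hce : c = e
  · subst hce; exact no3 h h1 h2 h5
  refine h.2 (SimpleGraph.Walk.cons h1 (.cons h2 (.cons h3 (.cons h4 (.cons h5 .nil))))) ?_
  have := h1.ne; have := h2.ne; have := h3.ne; have := h4.ne; have := h5.ne
  rw [SimpleGraph.Walk.cons_isCycle_iff]
  simp [SimpleGraph.Walk.cons_isPath_iff]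
  grind

lemma two_le_deg {C : Config} {a b c : C.V} (h1 : C.graph.Adj a b) (h2 : C.graph.Adj a c)
    (h : b ≠ c) : 2 ≤ C.deg a := by
  unfold deg
  rw [← Set.ncard_pair h]
  apply Set.ncard_le_ncard _ (Set.toFinite _)
  rintro y (rfl | rfl)
  · exact h1
  · exact h2

lemma nbr_of {C : Config} (hl : C.IsLinear) {a b c d : C.V} (h1 : C.graph.Adj a b)
    (h2 : C.graph.Adj a c) (h : b ≠ c) (h3 : C.graph.Adj a d) : d = b ∨ d = c := by
  by_contra hh
  push Not at hh
  have h4 : ({d, b, c} : Set C.V).ncard = 3 := by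
    rw [Set.ncard_eq_three]; exact ⟨d, b, c, hh.1, hh.2, h, rfl⟩
  have h5 : ({d, b, c} : Set C.V) ⊆ C.graph.neighborSet a := by
    rintro y (rfl | rfl | rfl)
    · exact h3
    · exact h1
    · exact h2
  have h6 := Set.ncard_le_ncard h5 (Set.toFinite _)
  have := hl.1 a
  unfold deg at this
  omega

lemma exists_nbr {C : Config} {a : C.V} (h : 1 ≤ C.deg a) : ∃ b, C.graph.Adj a b := by
  unfold deg at h
  have : (C.graph.neighborSet a).Nonempty := by
    rw [← Set.ncard_pos (Set.toFinite _)]; omega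
  exact this

lemma exists_other {C : Config} {a b : C.V} (h : 2 ≤ C.deg a) :
    ∃ c, C.graph.Adj a c ∧ c ≠ b := by
  unfold deg at h
  obtain ⟨c, hc, hcb⟩ := Set.exists_ne_of_one_lt_ncard (lt_of_lt_of_le one_lt_two h) b
  exact ⟨c, hc, hcb⟩

lemma w_eq {C : Config} (p : C.V) : C.w p = C.adjw p + C.deg p := by
  unfold adjw; ring

lemma dself {C : Config} {N : ℕ} {φ : C.V → Fin N → ℤ} (h : C.IsEmbedding N φ) (p : C.V) :
    dot (φ p) (φ p) = C.w p := by simp [h p p]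

lemma dadj {C : Config} {N : ℕ} {φ : C.V → Fin N → ℤ} (h : C.IsEmbedding N φ) {p q : C.V}
    (hpq : C.graph.Adj p q) : dot (φ p) (φ q) = -1 := by
  simp [h p q, hpq, hpq.ne]

lemma dzero {C : Config} {N : ℕ} {φ : C.V → Fin N → ℤ} (h : C.IsEmbedding N φ) {p q : C.V}
    (hne : p ≠ q) (hpq : ¬ C.graph.Adj p q) : dot (φ p) (φ q) = 0 := by
  simp [h p q, hpq, hne]


structure Ctx (C : Config) (N : ℕ) (φ : C.V → Fin N → ℤ) (x u v z : C.V)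
    (e1 e2 f g : Fin N) : Prop where
  lin : C.IsLinear
  emb : C.IsEmbedding N φ
  hI : ∀ p : C.V, 2 ≤ C.w p
  hle : ∀ p : C.V, p ≠ z → C.adjw p ≤ 1
  hz3 : C.adjw z ≤ 3
  zbad : ¬ C.IsBad z
  zbad' : ∀ y : C.V, C.IsBad y → ¬ C.graph.Adj y z
  hIV : C.adjw z = 3 → ∀ a b : C.V, C.graph.Adj a b → C.adjw a = 1 → C.adjw b = 1 → False
  hVI : ¬ C.HasPattern [3, 1, 0, 0, 1]
  xu : C.graph.Adj x u
  xv : C.graph.Adj x v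
  huv : u ≠ v
  au : C.adjw u = 1
  av : C.adjw v = 1
  zx : z ≠ x
  zu : z ≠ u
  zv : z ≠ v
  nzx : ¬ C.graph.Adj z x
  nzu : ¬ C.graph.Adj z u
  nzv : ¬ C.graph.Adj z v
  d12 : e1 ≠ e2
  d1f : e1 ≠ f
  d1g : e1 ≠ g
  d2f : e2 ≠ f
  d2g : e2 ≠ g
  dfg : f ≠ g
  z1 : φ z e1 = 1
  z2 : φ z e2 = 1
  zf : φ z f = 1
  zg : φ z g = 1
  zle : ∀ i, φ z i = 0 ∨ φ z i = 1
  xs : ∀ i, i ≠ e1 → i ≠ e2 → φ x i = 0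
  x1 : φ x e1 ≠ 0
  x2 : φ x e2 = - φ x e1
  u1 : φ u e1 = 1 ∨ φ u e1 = -1
  uf : φ u f = - φ u e1
  v2 : φ v e2 = 1 ∨ φ v e2 = -1
  vg : φ v g = - φ v e2
  duv : ∀ i, φ u i = 0 ∨ φ v i = 0
  uz : ∀ i, i ≠ e1 → i ≠ f → φ u i ≠ 0 → φ z i = 0
  vz : ∀ i, i ≠ e2 → i ≠ g → φ v i ≠ 0 → φ z i = 0
  tu : ∀ t, C.graph.Adj u t → t ≠ x → φ t e1 = 0 ∧ φ t e2 = 0 ∧ φ t g = 0 ∧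
    (∀ i, i ≠ f → φ t f ≠ 0 → φ u i ≠ 0 → φ t i = 0) ∧ t ≠ z ∧ ¬ C.graph.Adj t z ∧
    ∀ t2, C.graph.Adj t t2 → t2 ≠ u → ¬ C.graph.Adj t2 z
  tv : ∀ t, C.graph.Adj v t → t ≠ x → φ t e1 = 0 ∧ φ t e2 = 0 ∧ φ t f = 0 ∧
    (∀ i, i ≠ g → φ t g ≠ 0 → φ v i ≠ 0 → φ t i = 0) ∧ t ≠ z ∧ ¬ C.graph.Adj t z ∧
    ∀ t2, C.graph.Adj t t2 → t2 ≠ v → ¬ C.graph.Adj t2 z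

namespace Ctx

variable {C : Config} {N : ℕ} {φ : C.V → Fin N → ℤ} {x u v z : C.V} {e1 e2 f g : Fin N}

theorem symm (c : Ctx C N φ x u v z e1 e2 f g) : Ctx C N φ x v u z e2 e1 g f where
  lin := c.lin
  emb := c.emb
  hI := c.hI
  hle := c.hle
  hz3 := c.hz3
  zbad := c.zbad
  zbad' := c.zbad'
  hIV := c.hIV
  hVI := c.hVI
  xu := c.xv
  xv := c.xu
  huv := c.huv.symm
  au := c.av
  av := c.au
  zx := c.zx
  zu := c.zv
  zv := c.zu
  nzx := c.nzx
  nzu := c.nzv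
  nzv := c.nzu
  d12 := c.d12.symm
  d1f := c.d2g
  d1g := c.d2f
  d2f := c.d1g
  d2g := c.d1f
  dfg := c.dfg.symm
  z1 := c.z2
  z2 := c.z1
  zf := c.zg
  zg := c.zf
  zle := c.zle
  xs := fun i h1 h2 => c.xs i h2 h1
  x1 := by rw [c.x2]; exact neg_ne_zero.mpr c.x1
  x2 := by rw [c.x2]; ring
  u1 := c.v2
  uf := c.vg
  v2 := c.u1
  vg := c.uf
  duv := fun i => (c.duv i).symm
  uz := c.vz
  vz := c.uz
  tu := fun t h1 h2 => by
    obtain ⟨a1, a2, a3⟩ := c.tv t h1 h2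
    exact ⟨a2, a1, a3⟩
  tv := fun t h1 h2 => by
    obtain ⟨a1, a2, a3⟩ := c.tu t h1 h2
    exact ⟨a2, a1, a3⟩

def Far (C : Config) (x u v p : C.V) : Prop :=
  p ≠ x ∧ p ≠ u ∧ p ≠ v ∧ ¬ C.graph.Adj p x ∧ ¬ C.graph.Adj p u ∧ ¬ C.graph.Adj p v

/-- `i` is the third coordinate of `u`. -/
def Ub (C : Config) {N : ℕ} (φ : C.V → Fin N → ℤ) (u v z : C.V) (e1 e2 f g i : Fin N) : Prop :=
  C.deg u = 2 ∧ i ≠ e1 ∧ i ≠ e2 ∧ i ≠ f ∧ i ≠ g ∧ φ z i = 0 ∧ φ v i = 0 ∧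
  (φ u i = 1 ∨ φ u i = -1) ∧ ∀ j, j ≠ e1 → j ≠ f → j ≠ i → φ u j = 0

theorem degle (c : Ctx C N φ x u v z e1 e2 f g) (p : C.V) : C.deg p ≤ 2 := c.lin.1 p

theorem adj0 (c : Ctx C N φ x u v z e1 e2 f g) (p : C.V) : 0 ≤ C.adjw p := by
  have h1 := c.hI p
  have h2 := c.degle p
  have h3 := w_eq p
  omega

theorem wle (c : Ctx C N φ x u v z e1 e2 f g) {p : C.V} (h : p ≠ z) : C.w p ≤ 3 := by
  have h1 := c.hle p h
  have h2 := c.degle p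
  have h3 := w_eq p
  omega

theorem of_w3 (c : Ctx C N φ x u v z e1 e2 f g) {p : C.V} (h : p ≠ z) (h' : 3 ≤ C.w p) :
    C.adjw p = 1 ∧ C.deg p = 2 ∧ C.w p = 3 := by
  have h1 := c.hle p h
  have h2 := c.degle p
  have h3 := w_eq p
  omega

theorem of_adj0 (c : Ctx C N φ x u v z e1 e2 f g) {p : C.V} (h' : C.adjw p = 0) :
    C.deg p = 2 ∧ C.w p = 2 := by
  have h1 := c.hI p
  have h2 := c.degle p
  have h3 := w_eq p
  omega

theorem u_e2 (c : Ctx C N φ x u v z e1 e2 f g) : φ u e2 = 0 := by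
  have := c.duv e2
  have := c.v2
  omega

theorem u_g (c : Ctx C N φ x u v z e1 e2 f g) : φ u g = 0 := by
  have := c.duv g
  have := c.v2
  have := c.vg
  omega

theorem uform (c : Ctx C N φ x u v z e1 e2 f g) :
    (∀ j, j ≠ e1 → j ≠ f → φ u j = 0) ∨ ∃ i, Ub C φ u v z e1 e2 f g i := by
  by_cases h : ∀ j, j ≠ e1 → j ≠ f → φ u j = 0
  · exact Or.inl h
  right
  push Not at h
  obtain ⟨i, hi1, hif, hi⟩ := h
  have hw := w_eq u
  have hs := dself c.emb u
  have hd := c.degle u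
  have ha := c.au
  have h1 := c.u1
  have h2 := c.uf
  have h3 := norm3 (φ u) c.d1f (Ne.symm hi1) (Ne.symm hif)
  refine ⟨i, by omega, hi1, ?_, hif, ?_, c.uz i hi1 hif hi, ?_, by omega, ?_⟩
  · rintro rfl; exact hi c.u_e2
  · rintro rfl; exact hi c.u_g
  · rcases c.duv i with h | h
    · exact absurd h hi
    · exact h
  · intro j hj1 hjf hji
    have h3 := norm4 (φ u) c.d1f (Ne.symm hi1) (Ne.symm hif) (Ne.symm hj1) (Ne.symm hjf)
      (Ne.symm hji)
    omega

theorem dot_x (c : Ctx C N φ x u v z e1 e2 f g) {p : C.V} (h : dot (φ p) (φ x) = 0) :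
    φ p e1 = φ p e2 := by
  rw [dot2 _ _ c.d12 (fun k h1 h2 => by rw [c.xs k h1 h2, mul_zero]), c.x2] at h
  have : (φ p e1 - φ p e2) * φ x e1 = 0 := by linarith
  rcases mul_eq_zero.mp this with h | h
  · omega
  · exact absurd h c.x1

theorem dot_u (c : Ctx C N φ x u v z e1 e2 f g) {p : C.V} (h : dot (φ p) (φ u) = 0) :
    φ p f = φ p e1 ∨ ∃ i, Ub C φ u v z e1 e2 f g i ∧
      (φ p f - φ p e1).natAbs = (φ p i).natAbs := by
  have hu := c.u1
  have huf := c.uf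
  rcases c.uform with h1 | ⟨i, hi⟩
  · left
    rw [dot2 _ _ c.d1f (fun k h3 h2 => by rw [h1 k h3 h2, mul_zero]), huf] at h
    rcases hu with hu | hu <;> rw [hu] at h <;> omega
  · right
    refine ⟨i, hi, ?_⟩
    obtain ⟨_, hi1, hi2, hif, hig, hz, hv, hui, hj⟩ := hi
    rw [dot3 _ _ c.d1f hi1.symm hif.symm (fun k h3 h2 h4 => by rw [hj k h3 h2 h4, mul_zero]),
      huf] at h
    rcases hu with hu | hu <;> rcases hui with hui | hui <;> rw [hu, hui] at h <;> omega

theorem Ub_unique {i j : Fin N} (hi : Ub C φ u v z e1 e2 f g i)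
    (hj : Ub C φ u v z e1 e2 f g j) : i = j := by
  obtain ⟨_, hi1, hi2, hif, hig, hz, hv, hui, hii⟩ := hi
  obtain ⟨_, hj1, hj2, hjf, hjg, hz', hv', huj, hjj⟩ := hj
  by_contra hne
  have := hii j hj1 hjf (Ne.symm hne)
  omega

theorem far0 (c : Ctx C N φ x u v z e1 e2 f g) {p : C.V} (hp : Far C x u v p) (hpz : p ≠ z) :
    φ p e1 = 0 ∧ φ p e2 = 0 ∧ (φ p f = 0 ∨ φ p g = 0) ∧
    (φ p f = 0 ∨ ∃ i, Ub C φ u v z e1 e2 f g i ∧ (φ p f).natAbs = (φ p i).natAbs) := by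
  obtain ⟨h1, h2, h3, h4, h5, h6⟩ := hp
  have hx := c.dot_x (dzero c.emb h1 h4)
  have hU := c.dot_u (dzero c.emb h2 h5)
  have hV := c.symm.dot_u (dzero c.emb h3 h6)
  have hw := c.wle hpz
  rw [← dself c.emb] at hw
  have h12 := c.d12
  have h1f := c.d1f
  have h1g := c.d1g
  have h2f := c.d2f
  have h2g := c.d2g
  have hfg := c.dfg
  have ar1 : ∀ a b c d : ℤ, a = b → c = a → d = b →
      (a.natAbs : ℤ) + (b.natAbs + (c.natAbs + (d.natAbs + 0))) ≤ 3 → a = 0 := by omega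
  have ar2 : ∀ a b c d i : ℤ, a = b → c = a → (d - b).natAbs = i.natAbs →
      (a.natAbs : ℤ) + (b.natAbs + (c.natAbs + (d.natAbs + (i.natAbs + 0)))) ≤ 3 → a = 0 := by
    omega
  have ar3 : ∀ a b c d i : ℤ, a = b → d = b → (c - a).natAbs = i.natAbs →
      (a.natAbs : ℤ) + (b.natAbs + (c.natAbs + (d.natAbs + (i.natAbs + 0)))) ≤ 3 → a = 0 := by
    omega
  have ar4 : ∀ a b c d i j : ℤ, a = b → (d - b).natAbs = j.natAbs → (c - a).natAbs = i.natAbs →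
      (a.natAbs : ℤ) + (b.natAbs + (c.natAbs + (d.natAbs + (i.natAbs + (j.natAbs + 0))))) ≤ 3 →
      a = 0 ∧ (c = 0 ∨ d = 0) := by
    intro a b c d i j h1 h2 h3 h4
    have : a = 0 := by omega
    refine ⟨this, ?_⟩
    subst this
    omega
  rcases hU with hU | ⟨i, hi, hU⟩ <;> rcases hV with hV | ⟨j, hj, hV⟩
  · have := norm_list (φ p) [e1, e2, f, g] (by simp; grind)
    simp only [List.map_cons, List.map_nil, List.sum_cons, List.sum_nil] at this
    have h0 := ar1 _ _ _ _ hx hU hV (this.trans hw)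
    rw [h0] at hx hU
    exact ⟨h0, hx.symm, Or.inl hU, Or.inl hU⟩
  · obtain ⟨_, hj1, hj2, hjf, hjg, -⟩ := hj
    have := norm_list (φ p) [e1, e2, f, g, j] (by simp; grind)
    simp only [List.map_cons, List.map_nil, List.sum_cons, List.sum_nil] at this
    have h0 := ar2 _ _ _ _ _ hx hU hV (this.trans hw)
    rw [h0] at hx hU
    exact ⟨h0, hx.symm, Or.inl hU, Or.inl hU⟩
  · obtain ⟨_, hj1, hj2, hjf, hjg, -⟩ := id hi
    have := norm_list (φ p) [e1, e2, f, g, i] (by simp; grind)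
    simp only [List.map_cons, List.map_nil, List.sum_cons, List.sum_nil] at this
    have h0 := ar3 _ _ _ _ _ hx hV hU (this.trans hw)
    rw [h0] at hx hU
    rw [sub_zero] at hU
    exact ⟨h0, hx.symm, Or.inr (by rw [hV, ← hx]), Or.inr ⟨i, hi, hU⟩⟩
  · obtain ⟨_, hi1, hi2, hif, hig, hz, hv, hui, -⟩ := id hi
    obtain ⟨_, hj1, hj2, hjf, hjg, hz', hv', huj, -⟩ := hj
    have hij : i ≠ j := by rintro rfl; clear hU hV; omega
    have := norm_list (φ p) [e1, e2, f, g, i, j] (by simp; grind)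
    simp only [List.map_cons, List.map_nil, List.sum_cons, List.sum_nil] at this
    have h0 := ar4 _ _ _ _ _ _ hx hV hU (this.trans hw)
    rw [h0.1] at hx hU
    rw [sub_zero] at hU
    exact ⟨h0.1, hx.symm, h0.2, Or.inr ⟨i, hi, hU⟩⟩

theorem far_i (c : Ctx C N φ x u v z e1 e2 f g) {p : C.V} (hp : Far C x u v p) (hpz : p ≠ z)
    {i : Fin N} (hi : Ub C φ u v z e1 e2 f g i) : (φ p f).natAbs = (φ p i).natAbs := by
  have h0 := c.far0 hp hpz
  have hU := c.dot_u (dzero c.emb hp.2.1 hp.2.2.2.2.1)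
  rcases c.uform with h | _
  · obtain ⟨_, hi1, hi2, hif, hig, hz, hv, hui, hii⟩ := hi
    have := h i hi1 hif
    omega
  · rcases c.dot_u (dzero c.emb hp.2.1 hp.2.2.2.2.1) with h | ⟨j, hj, h⟩
    · have hpu := dzero c.emb hp.2.1 hp.2.2.2.2.1
      obtain ⟨_, hi1, hi2, hif, hig, hz, hv, hui, hii⟩ := hi
      rw [dot3 _ _ c.d1f hi1.symm hif.symm (fun k h3 h2 h4 => by rw [hii k h3 h2 h4, mul_zero]),
        h, h0.1] at hpu
      rcases hui with hui | hui <;> rw [hui] at hpu <;> omega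
    · have := Ub_unique hi hj
      subst this
      omega

/-- facts about neighbours of z -/
theorem far_nbr (c : Ctx C N φ x u v z e1 e2 f g) {p : C.V} (hp : C.graph.Adj z p) :
    Far C x u v p := by
  have l := c.lin
  refine ⟨?_, ?_, ?_, ?_, ?_, ?_⟩
  · rintro rfl; exact c.nzx hp
  · rintro rfl; exact c.nzu hp
  · rintro rfl; exact c.nzv hp
  · intro h
    rcases nbr_of l c.xu c.xv c.huv h.symm with rfl | rfl
    · exact c.nzu hp
    · exact c.nzv hp
  · intro h
    by_cases hx : p = x
    · subst hx; exact c.nzx hp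
    · exact (c.tu p h.symm hx).2.2.2.2.2.1 hp.symm
  · intro h
    by_cases hx : p = x
    · subst hx; exact c.nzx hp
    · exact (c.tv p h.symm hx).2.2.2.2.2.1 hp.symm

theorem far_nbr2 (c : Ctx C N φ x u v z e1 e2 f g) {p q : C.V} (hp : C.graph.Adj z p)
    (hq : C.graph.Adj p q)  : Far C x u v q := by
  have l := c.lin
  obtain ⟨a1, a2, a3, a4, a5, a6⟩ := c.far_nbr hp
  refine ⟨?_, ?_, ?_, ?_, ?_, ?_⟩
  · rintro rfl; exact a4 hq
  · rintro rfl; exact a5 hq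
  · rintro rfl; exact a6 hq
  · intro h
    rcases nbr_of l c.xu c.xv c.huv h.symm with rfl | rfl
    · exact a5 hq
    · exact a6 hq
  · intro h
    have hx : q ≠ x := by rintro rfl; exact a4 hq
    exact (c.tu q h.symm hx).2.2.2.2.2.2 p hq.symm a2 hp.symm
  · intro h
    have hx : q ≠ x := by rintro rfl; exact a4 hq
    exact (c.tv q h.symm hx).2.2.2.2.2.2 p hq.symm a3 hp.symm

/-- p is not (adjacent to) t, q is not t -/
theorem nbr_t (c : Ctx C N φ x u v z e1 e2 f g) {p t : C.V} (hp : C.graph.Adj z p)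
    (ht : C.graph.Adj u t) (htx : t ≠ x) : p ≠ t ∧ ¬ C.graph.Adj p t := by
  obtain ⟨a1, a2, a3, a4, a5, a6⟩ := c.far_nbr hp
  refine ⟨?_, ?_⟩
  · rintro rfl; exact a5 ht.symm
  · intro h; exact (c.tu t ht htx).2.2.2.2.2.2 p h.symm a2 hp.symm

theorem nz2 (c : Ctx C N φ x u v z e1 e2 f g) {p q : C.V} (hp : C.graph.Adj z p)
    (hq : C.graph.Adj p q) : ¬ C.graph.Adj q z := fun h => no3 c.lin hp hq h

theorem t_u (c : Ctx C N φ x u v z e1 e2 f g) {t : C.V} (ht : C.graph.Adj u t) (htx : t ≠ x)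
    {i : Fin N} (hi : Ub C φ u v z e1 e2 f g i) (hf : φ t f = 0) : φ t i ≠ 0 := by
  intro h0
  have h := dadj c.emb ht.symm
  obtain ⟨_, hi1, hi2, hif, hig, hz, hv, hui, hii⟩ := hi
  rw [dot3 _ _ c.d1f hi1.symm hif.symm (fun k h3 h2 h4 => by rw [hii k h3 h2 h4, mul_zero]),
        h0, hf, (c.tu t ht htx).1] at h
  omega

/-- `p` meets the third coordinate of `u` as it meets `f`. -/
def Mt (C : Config) {N : ℕ} (φ : C.V → Fin N → ℤ) (u v z : C.V) (e1 e2 f g : Fin N)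
    (p : C.V) : Prop :=
  φ p f = 0 ∨ ∃ i, Ub C φ u v z e1 e2 f g i ∧ (φ p f).natAbs = (φ p i).natAbs

theorem far0' (c : Ctx C N φ x u v z e1 e2 f g) {p : C.V} (hp : Far C x u v p) (hpz : p ≠ z) :
    φ p e1 = 0 ∧ φ p e2 = 0 ∧ (φ p f = 0 ∨ φ p g = 0) ∧ Mt C φ u v z e1 e2 f g p :=
  c.far0 hp hpz

theorem pat (c : Ctx C N φ x u v z e1 e2 f g) {p q t : C.V} (h3 : C.adjw z = 3)
    (hp : C.graph.Adj z p) (hpw : C.adjw p = 1) (hq : C.graph.Adj p q) (hqz : q ≠ z)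
    (hqt : C.graph.Adj q t) (htu : C.graph.Adj u t) (htx : t ≠ x) : False := by
  obtain ⟨a1, a2, a3, a4, a5, a6⟩ := c.far_nbr hp
  obtain ⟨b1, b2, b3, b4, b5, b6⟩ := c.far_nbr2 hp hq
  obtain ⟨t1, t2, t3, t4, t5, t6, t7⟩ := c.tu t htu htx
  have hqw : C.adjw q = 0 := by
    have h1 := c.hle q hqz
    have h2 := c.adj0 q
    have h4 : C.adjw q ≠ 1 := fun h => c.hIV h3 p q hq hpw h
    omega
  have htw : C.adjw t = 0 := by
    have h1 := c.hle t t5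
    have h2 := c.adj0 t
    have h4 : C.adjw t ≠ 1 := fun h => c.hIV h3 u t htu c.au h
    omega
  have hpt := c.nbr_t hp htu htx
  apply c.hVI
  refine ⟨4, fun n => match n with | 0 => z | 1 => p | 2 => q | 3 => t | _ => u,
    ⟨?_, ?_⟩, rfl, ?_⟩
  · have n1 := hp.ne
    have n2 := hq.ne
    have n3 := hqt.ne
    have n4 := htu.ne
    have n5 := c.zu
    have n6 := hpt.1
    intro i hi j hj
    interval_cases i <;> interval_cases j <;> simp <;> grind
  · intro i hi
    interval_cases i
    · exact hp
    · exact hq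
    · exact hqt
    · exact htu.symm
  · intro i
    fin_cases i
    · exact h3
    · exact hpw
    · exact hqw
    · exact htw
    · exact c.au

theorem zform4 (c : Ctx C N φ x u v z e1 e2 f g) (hw : C.w z = 4) {j : Fin N}
    (h1 : j ≠ e1) (h2 : j ≠ e2) (hf : j ≠ f) (hg : j ≠ g) : φ z j = 0 := by
  have h12 := c.d12
  have h1f := c.d1f
  have h1g := c.d1g
  have h2f := c.d2f
  have h2g := c.d2g
  have hfg := c.dfg
  have := norm_list (φ z) [e1, e2, f, g, j] (by simp; grind)
  simp only [List.map_cons, List.map_nil, List.sum_cons, List.sum_nil] at this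
  rw [dself c.emb, hw, c.z1, c.z2, c.zf, c.zg] at this
  rcases c.zle j with h | h
  · exact h
  · rw [h] at this; norm_num at this

theorem dotz4 (c : Ctx C N φ x u v z e1 e2 f g) (hw : C.w z = 4) (p : C.V) :
    dot (φ p) (φ z) = φ p e1 + φ p e2 + φ p f + φ p g := by
  rw [dot4 _ _ c.d12 c.d1f c.d2f c.d1g c.d2g c.dfg
    (fun l a b d e => by rw [c.zform4 hw a b d e, mul_zero]), c.z1, c.z2, c.zf, c.zg]
  ring

set_option maxHeartbeats 1000000 in
theorem W4side (c : Ctx C N φ x u v z e1 e2 f g) (hw : C.w z = 4) {p : C.V}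
    (hp : C.graph.Adj z p) (hpf : φ p f ≠ 0) : C.adjw p = 1 ∧ C.adjw z ≠ 3 := by
  have fp := c.far_nbr hp
  obtain ⟨p1, p2, p3, p4⟩ := c.far0' fp hp.ne'
  have pg : φ p g = 0 := p3.resolve_left hpf
  obtain ⟨i, hi, hpi⟩ := Or.resolve_left p4 hpf
  have hpi0 : φ p i ≠ 0 := by omega
  obtain ⟨t, hut, htx⟩ := exists_other (C := C) (a := u) (b := x) (by rw [hi.1])
  obtain ⟨t1, t2, t3, t4, t5, t6, t7⟩ := c.tu t hut htx
  have tf : φ t f = 0 := by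
    have h := dzero c.emb t5 t6
    rw [c.dotz4 hw, t1, t2, t3] at h
    omega
  have ti := c.t_u hut htx hi tf
  obtain ⟨hpt, hpt'⟩ := c.nbr_t hp hut htx
  obtain ⟨k, hkf, hki, hk⟩ : ∃ k, k ≠ f ∧ k ≠ i ∧ φ p k * φ t k ≠ 0 := by
    by_contra hcon
    push Not at hcon
    have h := dzero c.emb hpt hpt'
    rw [dot2 _ _ hi.2.2.2.1 (fun k a b => hcon k b a), tf, mul_zero, add_zero] at h
    exact mul_ne_zero hpi0 ti h
  have hpk := left_ne_zero_of_mul hk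
  have htk := right_ne_zero_of_mul hk
  have hif := hi.2.2.2.1
  have hn := norm3 (φ p) hif.symm hkf.symm hki.symm
  rw [dself c.emb] at hn
  obtain ⟨hp1, hp2, hp3⟩ := c.of_w3 hp.ne' (by omega)
  refine ⟨hp1, fun h3 => ?_⟩
  obtain ⟨q, hpq, hqz⟩ := exists_other (C := C) (a := p) (b := z) (by rw [hp2])
  have fq := c.far_nbr2 hp hpq
  obtain ⟨q1, q2, q3, q4⟩ := c.far0' fq hqz
  have hqz0 := dzero c.emb hqz (c.nz2 hp hpq)
  rw [c.dotz4 hw, q1, q2] at hqz0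
  have qf : φ q f = 0 := by omega
  have qi : φ q i = 0 := by
    have := c.far_i fq hqz hi
    omega
  by_cases hqt : C.graph.Adj q t
  · exact c.pat h3 hp hp1 hpq hqz hqt hut htx
  have hqt' : q ≠ t := by rintro rfl; exact hpt' hpq
  have hqp := dadj c.emb hpq.symm
  have hps : ∀ j, j ≠ f → j ≠ i → j ≠ k → φ p j = 0 := by
    intro j a b d
    have hn := norm4 (φ p) hif.symm hkf.symm hki.symm a.symm b.symm d.symm
    rw [dself c.emb] at hn
    have w3 : C.w p ≤ 3 := hp3.le
    clear * - hn w3 hpf hpi0 hpk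
    omega
  rw [dot3 _ _ hif.symm hkf.symm hki.symm (fun j a b d => by rw [hps j a b d, mul_zero]),
    qf, qi, zero_mul, zero_mul] at hqp
  have hqk : φ q k ≠ 0 := by
    intro h; rw [h] at hqp; simp at hqp
  obtain ⟨l, hlk, hl⟩ : ∃ l, l ≠ k ∧ φ q l * φ t l ≠ 0 := by
    by_contra hcon
    push Not at hcon
    have h := dzero c.emb hqt' hqt
    rw [dot1 _ _ k hcon] at h
    exact mul_ne_zero hqk htk h
  have hli : l ≠ i := by rintro rfl; exact hl (by rw [qi, zero_mul])
  have htl := right_ne_zero_of_mul hl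
  have hn := norm3 (φ t) hki.symm hli.symm hlk.symm
  rw [dself c.emb] at hn
  have := c.of_w3 t5 (by omega)
  exact c.hIV h3 u t hut c.au this.1

theorem W4nbr (c : Ctx C N φ x u v z e1 e2 f g) (hw : C.w z = 4) {p : C.V}
    (hp : C.graph.Adj z p) : C.adjw p = 1 ∧ C.adjw z ≠ 3 := by
  obtain ⟨p1, p2, p3, p4⟩ := c.far0' (c.far_nbr hp) hp.ne'
  have h := dadj c.emb hp.symm
  rw [c.dotz4 hw, p1, p2] at h
  by_cases hf : φ p f = 0
  · exact c.symm.W4side hw hp (by omega)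
  · exact c.W4side hw hp hf

theorem W4 (c : Ctx C N φ x u v z e1 e2 f g) (hw : C.w z = 4) : False := by
  have h1 := w_eq z
  have h2 := c.degle z
  have h3 := c.hz3
  obtain ⟨p, hp⟩ := exists_nbr (C := C) (a := z) (by omega)
  have hpp := c.W4nbr hw hp
  obtain ⟨q, hq, hne⟩ := exists_other (C := C) (a := z) (b := p) (by omega)
  have hqq := c.W4nbr hw hq
  exact c.zbad ⟨p, q, hne.symm, hp, hq, by omega, by omega⟩

theorem zform5 (c : Ctx C N φ x u v z e1 e2 f g) (hw : C.w z = 5) :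
    ∃ h, h ≠ e1 ∧ h ≠ e2 ∧ h ≠ f ∧ h ≠ g ∧ φ z h = 1 ∧
      ∀ p, dot (φ p) (φ z) = φ p e1 + φ p e2 + φ p f + φ p g + φ p h := by
  have h12 := c.d12
  have h1f := c.d1f
  have h1g := c.d1g
  have h2f := c.d2f
  have h2g := c.d2g
  have hfg := c.dfg
  have hs := dself c.emb z
  obtain ⟨h, a1, a2, a3, a4, ha⟩ : ∃ h, h ≠ e1 ∧ h ≠ e2 ∧ h ≠ f ∧ h ≠ g ∧ φ z h ≠ 0 := by
    by_contra hcon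
    push Not at hcon
    rw [dot4 _ _ c.d12 c.d1f c.d2f c.d1g c.d2g c.dfg
      (fun l a b d e => by rw [hcon l a b d e, mul_zero]), c.z1, c.z2, c.zf, c.zg, hw] at hs
    norm_num at hs
  have hz1 : φ z h = 1 := (c.zle h).resolve_left ha
  refine ⟨h, a1, a2, a3, a4, hz1, fun p => ?_⟩
  rw [dot5 _ _ c.d12 c.d1f c.d2f c.d1g c.d2g c.dfg a1.symm a2.symm a3.symm a4.symm ?_,
    c.z1, c.z2, c.zf, c.zg, hz1]
  · ring
  · intro j b1 b2 b3 b4 b5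
    have := norm_list (φ z) [e1, e2, f, g, h, j] (by simp; grind)
    simp only [List.map_cons, List.map_nil, List.sum_cons, List.sum_nil] at this
    rw [dself c.emb, hw, c.z1, c.z2, c.zf, c.zg, hz1] at this
    rcases c.zle j with h | h
    · rw [h, mul_zero]
    · rw [h] at this; norm_num at this

theorem t_w (c : Ctx C N φ x u v z e1 e2 f g) (h3 : C.adjw z = 3) {t : C.V}
    (hut : C.graph.Adj u t) (htz : t ≠ z) : C.w t = 2 := by
  have h1 := c.hle t htz
  have h2 := c.adj0 t
  have h4 : C.adjw t ≠ 1 := fun h => c.hIV h3 u t hut c.au h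
  exact (c.of_adj0 (by omega)).2

theorem T5a (c : Ctx C N φ x u v z e1 e2 f g) {p : C.V} (hp : C.graph.Adj z p)
    (hw2 : C.w p = 2) : φ p f = 0 := by
  by_contra hpf
  have fp := c.far_nbr hp
  obtain ⟨p1, p2, p3, p4⟩ := c.far0' fp hp.ne'
  obtain ⟨i, hi, hpi⟩ := Or.resolve_left p4 hpf
  have hif := hi.2.2.2.1
  have hpi0 : φ p i ≠ 0 := by omega
  obtain ⟨t, hut, htx⟩ := exists_other (C := C) (a := u) (b := x) (by rw [hi.1])
  obtain ⟨t1, t2, t3, t4, t5, t6, t7⟩ := c.tu t hut htx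
  obtain ⟨hpt, hpt'⟩ := c.nbr_t hp hut htx
  have hps : ∀ j, j ≠ f → j ≠ i → φ p j = 0 := by
    intro j a b
    have hn := norm3 (φ p) hif.symm a.symm b.symm
    rw [dself c.emb] at hn
    omega
  have h := dzero c.emb hpt hpt'
  rw [dot2 _ _ hif.symm (fun j a b => by rw [hps j a b, zero_mul])] at h
  by_cases tf : φ t f = 0
  · have ti := c.t_u hut htx hi tf
    rw [tf, mul_zero, zero_add] at h
    exact mul_ne_zero hpi0 ti h
  · have hui : φ u i ≠ 0 := by
      have := hi.2.2.2.2.2.2.2.1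
      omega
    rw [t4 i hif tf hui, mul_zero, add_zero] at h
    exact mul_ne_zero hpf tf h

theorem T5b (c : Ctx C N φ x u v z e1 e2 f g) (h3 : C.adjw z = 3) {h : Fin N} (hhf : h ≠ f)
    (hd : ∀ p, dot (φ p) (φ z) = φ p e1 + φ p e2 + φ p f + φ p g + φ p h)
    {p t : C.V} (hp : C.graph.Adj z p) (hw2 : C.w p = 2)
    (hut : C.graph.Adj u t) (htx : t ≠ x) : φ t f = 0 ∧ φ t h = 0 := by
  have pf := c.T5a hp hw2
  have pg := c.symm.T5a hp hw2
  have fp := c.far_nbr hp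
  obtain ⟨p1, p2, p3, p4⟩ := c.far0' fp hp.ne'
  have hpz := dadj c.emb hp.symm
  rw [hd, p1, p2, pf, pg] at hpz
  obtain ⟨t1, t2, t3, t4, t5, t6, t7⟩ := c.tu t hut htx
  have htw := c.t_w h3 hut t5
  obtain ⟨hpt, hpt'⟩ := c.nbr_t hp hut htx
  have htz := dzero c.emb t5 t6
  rw [hd, t1, t2, t3] at htz
  by_cases tf : φ t f = 0
  · exact ⟨tf, by omega⟩
  exfalso
  have hts : ∀ j, j ≠ f → j ≠ h → φ t j = 0 := by
    intro j a b
    have hn := norm3 (φ t) hhf.symm a.symm b.symm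
    rw [dself c.emb] at hn
    omega
  have h0 := dzero c.emb hpt hpt'
  rw [dot2 _ _ hhf.symm (fun j a b => by rw [hts j a b, mul_zero]), pf, zero_mul, zero_add] at h0
  exact mul_ne_zero (by omega) (by omega) h0

/-- a far vertex of weight two orthogonal to z avoids f, g, h -/
theorem far2 (c : Ctx C N φ x u v z e1 e2 f g) {h : Fin N} (hhf : h ≠ f) (hhg : h ≠ g)
    (hzh : φ z h = 1)
    (hd : ∀ p, dot (φ p) (φ z) = φ p e1 + φ p e2 + φ p f + φ p g + φ p h)
    {p : C.V} (fp : Far C x u v p) (hpz : p ≠ z) (hpz' : ¬ C.graph.Adj p z) (hw2 : C.w p = 2) :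
    φ p f = 0 ∧ φ p g = 0 ∧ φ p h = 0 := by
  obtain ⟨p1, p2, p3, p4⟩ := c.far0' fp hpz
  obtain ⟨-, -, -, p5⟩ := c.symm.far0' (p := p)
    ⟨fp.1, fp.2.2.1, fp.2.1, fp.2.2.2.1, fp.2.2.2.2.2, fp.2.2.2.2.1⟩ hpz
  have h0 := dzero c.emb hpz hpz'
  rw [hd, p1, p2] at h0
  have hf : φ p f = 0 := by
    by_contra hf
    obtain ⟨i, hi, hpi⟩ := Or.resolve_left p4 hf
    have hih : i ≠ h := by
      rintro rfl
      have := hi.2.2.2.2.2.1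
      omega
    have hn := norm3 (φ p) hi.2.2.2.1 hih hhf.symm
    rw [dself c.emb] at hn
    omega
  have hg : φ p g = 0 := by
    by_contra hg
    obtain ⟨i, hi, hpi⟩ := Or.resolve_left p5 hg
    have hih : i ≠ h := by
      rintro rfl
      have := hi.2.2.2.2.2.1
      omega
    have hn := norm3 (φ p) hi.2.2.2.1 hih hhg.symm
    rw [dself c.emb] at hn
    omega
  omega

theorem W5side (c : Ctx C N φ x u v z e1 e2 f g) (h3 : C.adjw z = 3) {h : Fin N}
    (hhf : h ≠ f) (hhg : h ≠ g) (hzh : φ z h = 1)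
    (hd : ∀ p, dot (φ p) (φ z) = φ p e1 + φ p e2 + φ p f + φ p g + φ p h)
    {p q : C.V} (hp : C.graph.Adj z p) (hw2 : C.w p = 2) (hq : C.graph.Adj z q)
    (hqf : φ q f ≠ 0) : False := by
  have fq := c.far_nbr hq
  obtain ⟨q1, q2, q3, q4⟩ := c.far0' fq hq.ne'
  obtain ⟨i, hi, hqi⟩ := Or.resolve_left q4 hqf
  have hif := hi.2.2.2.1
  have hqi0 : φ q i ≠ 0 := by omega
  obtain ⟨t, hut, htx⟩ := exists_other (C := C) (a := u) (b := x) (by rw [hi.1])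
  obtain ⟨t1, t2, t3, t4, t5, t6, t7⟩ := c.tu t hut htx
  have htw := c.t_w h3 hut t5
  obtain ⟨hqt, hqt'⟩ := c.nbr_t hq hut htx
  obtain ⟨tf, th⟩ := c.T5b h3 hhf hd hp hw2 hut htx
  have ti := c.t_u hut htx hi tf
  obtain ⟨k, hkf, hki, hk⟩ : ∃ k, k ≠ f ∧ k ≠ i ∧ φ q k * φ t k ≠ 0 := by
    by_contra hcon
    push Not at hcon
    have h := dzero c.emb hqt hqt'
    rw [dot2 _ _ hif (fun k a b => hcon k b a), tf, mul_zero, add_zero] at h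
    exact mul_ne_zero hqi0 ti h
  have hqk := left_ne_zero_of_mul hk
  have htk := right_ne_zero_of_mul hk
  have hn := norm3 (φ q) hif.symm hkf.symm hki.symm
  rw [dself c.emb] at hn
  obtain ⟨hq1, hq2, hq3⟩ := c.of_w3 hq.ne' (by omega)
  obtain ⟨r, hqr, hrz⟩ := exists_other (C := C) (a := q) (b := z) (by rw [hq2])
  have fr := c.far_nbr2 hq hqr
  have hrw : C.w r = 2 := by
    have h1 := c.hle r hrz
    have h2 := c.adj0 r
    have h4 : C.adjw r ≠ 1 := fun h => c.hIV h3 q r hqr hq1 h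
    exact (c.of_adj0 (by omega)).2
  obtain ⟨rf, rg, rh⟩ := c.far2 hhf hhg hzh hd fr hrz (c.nz2 hq hqr) hrw
  have ri : φ r i = 0 := by
    have := c.far_i fr hrz hi
    omega
  have hqs : ∀ j, j ≠ f → j ≠ i → j ≠ k → φ q j = 0 := by
    intro j a b d
    have hn := norm4 (φ q) hif.symm hkf.symm hki.symm a.symm b.symm d.symm
    rw [dself c.emb] at hn
    have w3 : C.w q ≤ 3 := hq3.le
    clear * - hn w3 hqf hqi0 hqk
    omega
  have hrq := dadj c.emb hqr.symm
  rw [dot3 _ _ hif.symm hkf.symm hki.symm (fun j a b d => by rw [hqs j a b d, mul_zero]),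
    rf, ri, zero_mul, zero_mul] at hrq
  have hrk : φ r k ≠ 0 := by
    intro h; rw [h] at hrq; simp at hrq
  have hts : ∀ j, j ≠ i → j ≠ k → φ t j = 0 := by
    intro j a b
    have hn := norm3 (φ t) hki.symm a.symm b.symm
    rw [dself c.emb] at hn
    omega
  have hrt' : r ≠ t := by rintro rfl; exact hqt' hqr
  by_cases hrt : C.graph.Adj r t
  · exact c.pat h3 hq hq1 hqr hrz hrt hut htx
  · have h0 := dzero c.emb hrt' hrt
    rw [dot2 _ _ hki.symm (fun j a b => by rw [hts j a b, mul_zero]), ri, zero_mul, zero_add] at h0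
    exact mul_ne_zero hrk htk h0

theorem W5aux (c : Ctx C N φ x u v z e1 e2 f g) (h3 : C.adjw z = 3) (hzd : C.deg z = 2)
    {h : Fin N} (hhf : h ≠ f) (hhg : h ≠ g) (hzh : φ z h = 1)
    (hd : ∀ p, dot (φ p) (φ z) = φ p e1 + φ p e2 + φ p f + φ p g + φ p h)
    {p : C.V} (hp : C.graph.Adj z p) (hp0 : C.adjw p = 0) : False := by
  obtain ⟨hpd, hw2⟩ := c.of_adj0 hp0
  have pf := c.T5a hp hw2
  have pg := c.symm.T5a hp hw2
  obtain ⟨p1, p2, p3, p4⟩ := c.far0' (c.far_nbr hp) hp.ne'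
  have hpz := dadj c.emb hp.symm
  rw [hd, p1, p2, pf, pg] at hpz
  have ph : φ p h = -1 := by omega
  have hss := dself c.emb p
  obtain ⟨r, hrh, hr⟩ : ∃ r, r ≠ h ∧ φ p r ≠ 0 := by
    by_contra hcon
    push Not at hcon
    rw [dot1 _ _ h (fun k hk => by rw [hcon k hk, zero_mul]), ph, hw2] at hss
    norm_num at hss
  have hps : ∀ j, j ≠ h → j ≠ r → φ p j = 0 := by
    intro j a b
    have hn := norm3 (φ p) hrh.symm a.symm b.symm
    rw [dself c.emb] at hn
    omega
  have hr1 : φ p r = 1 ∨ φ p r = -1 := by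
    have hn := norm2 (φ p) hrh.symm
    rw [dself c.emb] at hn
    omega
  obtain ⟨s, hps', hsz⟩ := exists_other (C := C) (a := p) (b := z) (by rw [hpd])
  have hs0 : C.adjw s = 0 := by
    by_contra hne
    have := c.adj0 s
    exact c.zbad' p ⟨z, s, hsz.symm, hp.symm, hps', by omega, by omega⟩ hp.symm
  obtain ⟨hsd, hsw⟩ := c.of_adj0 hs0
  have fs := c.far_nbr2 hp hps'
  obtain ⟨sf, sg, sh⟩ := c.far2 hhf hhg hzh hd fs hsz (c.nz2 hp hps') hsw
  have hsp := dadj c.emb hps'.symm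
  rw [dot2 _ _ hrh.symm (fun j a b => by rw [hps j a b, mul_zero]), sh, zero_mul, zero_add] at hsp
  have sr : φ s r = - φ p r := by
    rcases hr1 with h | h <;> rw [h] at hsp ⊢ <;> omega
  have hsss := dself c.emb s
  obtain ⟨k, hkr, hk⟩ : ∃ k, k ≠ r ∧ φ s k ≠ 0 := by
    by_contra hcon
    push Not at hcon
    rw [dot1 _ _ r (fun k hk => by rw [hcon k hk, zero_mul]), sr, hsw] at hsss
    rcases hr1 with h | h <;> rw [h] at hsss <;> norm_num at hsss
  have hss' : ∀ j, j ≠ r → j ≠ k → φ s j = 0 := by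
    intro j a b
    have hn := norm3 (φ s) hkr.symm a.symm b.symm
    rw [dself c.emb] at hn
    omega
  have hk1 : φ s k = 1 ∨ φ s k = -1 := by
    have hn := norm2 (φ s) hkr.symm
    rw [dself c.emb] at hn
    omega
  have hkh : k ≠ h := by rintro rfl; exact hk sh
  -- relations for vectors orthogonal to p and s
  have rel : ∀ y, dot (φ y) (φ p) = 0 → dot (φ y) (φ s) = 0 →
      φ y r = φ p r * φ y h ∧ φ y k = φ s k * φ y h := by
    intro y h1 h2
    rw [dot2 _ _ hrh.symm (fun j a b => by rw [hps j a b, mul_zero]), ph] at h1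
    rw [dot2 _ _ hkr.symm (fun j a b => by rw [hss' j a b, mul_zero]), sr] at h2
    rcases hr1 with h | h <;> rcases hk1 with h' | h' <;> rw [h] at h1 h2 ⊢ <;>
      rw [h'] at h2 ⊢ <;> omega
  obtain ⟨q, hq, hqp⟩ := exists_other (C := C) (a := z) (b := p) (by rw [hzd])
  have l := c.lin
  have qp0 : dot (φ q) (φ p) = 0 := dzero c.emb hqp (fun hh => no3 l hq hh hp.symm)
  have qs0 : dot (φ q) (φ s) = 0 := by
    apply dzero c.emb
    · rintro rfl; exact no3 l hq hps'.symm hp.symm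
    · intro hh; exact no4 l hp hps' hh.symm hq.symm hsz.symm hqp.symm
  obtain ⟨qr, qk⟩ := rel q qp0 qs0
  obtain ⟨q1, q2, q3, q4⟩ := c.far0' (c.far_nbr hq) hq.ne'
  have hqz := dadj c.emb hq.symm
  rw [hd, q1, q2] at hqz
  by_cases qh : φ q h = 0
  · by_cases qf : φ q f = 0
    · refine c.symm.W5side h3 hhg hhf hzh ?_ hp hw2 hq (by omega)
      intro p; rw [hd]; ring
    · exact c.W5side h3 hhf hhg hzh hd hp hw2 hq qf
  · have qr0 : φ q r ≠ 0 := by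
      rw [qr]; exact mul_ne_zero hr qh
    have qk0 : φ q k ≠ 0 := by
      rw [qk]; exact mul_ne_zero hk qh
    have hn := norm3 (φ q) hrh.symm hkh.symm hkr.symm
    rw [dself c.emb] at hn
    obtain ⟨hq1, hq2, hq3⟩ := c.of_w3 hq.ne' (by omega)
    have hqs : ∀ j, j ≠ h → j ≠ r → j ≠ k → φ q j = 0 := by
      intro j a b d
      have hn := norm4 (φ q) hrh.symm hkh.symm hkr.symm a.symm b.symm d.symm
      rw [dself c.emb] at hn
      omega
    obtain ⟨y, hqy, hyz⟩ := exists_other (C := C) (a := q) (b := z) (by rw [hq2])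
    have yp0 : dot (φ y) (φ p) = 0 := by
      apply dzero c.emb
      · rintro rfl; exact no3 l hq hqy hp.symm
      · intro hh; exact no4 l hq hqy hh hp.symm hyz.symm hqp
    have ys0 : dot (φ y) (φ s) = 0 := by
      apply dzero c.emb
      · rintro rfl; exact no4 l hq hqy hps'.symm hp.symm hyz.symm hqp
      · intro hh; exact no5 l hq hqy hh hps'.symm hp.symm
    obtain ⟨yr, yk⟩ := rel y yp0 ys0
    have hyq := dadj c.emb hqy.symm
    rw [dot3 _ _ hrh.symm hkh.symm hkr.symm (fun j a b d => by rw [hqs j a b d, mul_zero]),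
      yr, yk, qr, qk] at hyq
    have : 3 * (φ y h * φ q h) = -1 := by
      rcases hr1 with h | h <;> rcases hk1 with h' | h' <;> rw [h, h'] at hyq <;> linarith
    omega

theorem W5 (c : Ctx C N φ x u v z e1 e2 f g) (hw : C.w z = 5) : False := by
  have h1 := w_eq z
  have h2 := c.degle z
  have h3 := c.hz3
  obtain ⟨h, _, _, hf, hg, hz, hd⟩ := c.zform5 hw
  obtain ⟨p, hp⟩ := exists_nbr (C := C) (a := z) (by omega)
  obtain ⟨q, hq, hne⟩ := exists_other (C := C) (a := z) (b := p) (by omega)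
  have hp0 := c.adj0 p
  have hq0 := c.adj0 q
  by_cases hp1 : C.adjw p = 0
  · exact c.W5aux (by omega) (by omega) hf hg hz hd hp hp1
  by_cases hq1 : C.adjw q = 0
  · exact c.W5aux (by omega) (by omega) hf hg hz hd hq hq1
  exact c.zbad ⟨p, q, hne.symm, hp, hq, by omega, by omega⟩

theorem absurd' (c : Ctx C N φ x u v z e1 e2 f g) : False := by
  have h1 := w_eq z
  have h2 := c.degle z
  have h3 := c.hz3
  have hn := norm4 (φ z) c.d12 c.d1f c.d2f c.d1g c.d2g c.dfg
  rw [dself c.emb, c.z1, c.z2, c.zf, c.zg] at hn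
  have : C.w z = 4 ∨ C.w z = 5 := by omega
  rcases this with h | h
  · exact c.W4 h
  · exact c.W5 h

end Ctx

theorem ebp_nb {C : Config} (hlin : C.IsLinear) {m : ℕ} {vc : ℕ → C.V} (h : C.IsEBPCand m vc)
    {a b c : C.V} (ha : a ∈ C.ebpSet m vc) (hb : C.graph.Adj a b) (hc : C.graph.Adj a c)
    (hbc : b ≠ c) : (b ∈ C.ebpSet m vc ∧ c ∈ C.ebpSet m vc) ∨
      ∃ p q, p ∈ C.ebpSet m vc ∧ C.graph.Adj a p ∧ C.adjw p = 0 ∧ C.graph.Adj p q ∧ q ≠ a ∧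
        C.adjw q = 0 := by
  obtain ⟨⟨hinj, hadj⟩, -, h0, hm⟩ := h
  obtain ⟨i, hi, rfl⟩ := ha
  have hd := two_le_deg hb hc hbc
  by_cases hi0 : i = 0
  · subst hi0
    rcases h0 with h0 | ⟨h2, h3, h4⟩
    · unfold IsLeaf at h0; omega
    · right
      refine ⟨vc 1, vc 2, ⟨1, by omega, rfl⟩, hadj 0 (by omega), h3, hadj 1 (by omega), ?_, h4⟩
      intro hh
      have := hinj 2 h2 0 (by omega) hh
      omega
  by_cases him : i = m
  · subst him
    rcases hm with h0 | ⟨h2, h3, h4⟩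
    · unfold IsLeaf at h0; omega
    · right
      obtain ⟨k, rfl⟩ : ∃ k, i = k + 2 := ⟨i - 2, by omega⟩
      have e1 : k + 2 - 1 = k + 1 := by omega
      have e2 : k + 2 - 2 = k := by omega
      rw [e1] at h3
      rw [e2] at h4
      refine ⟨vc (k + 1), vc k, ⟨k + 1, by omega, rfl⟩, (hadj (k + 1) (by omega)).symm, h3,
        (hadj k (by omega)).symm, ?_, h4⟩
      intro hh
      have := hinj k (by omega) (k + 2) (by omega) hh
      omega
  left
  obtain ⟨k, rfl⟩ : ∃ k, i = k + 1 := ⟨i - 1, by omega⟩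
  have n1 := (hadj k (by omega)).symm
  have n2 := hadj (k + 1) (by omega)
  have hne : vc k ≠ vc (k + 1 + 1) := fun hh => by
    have := hinj k (by omega) (k + 1 + 1) (by omega) hh
    omega
  have key : ∀ d, C.graph.Adj (vc (k + 1)) d → d ∈ C.ebpSet m vc := by
    intro d hd
    rcases nbr_of hlin n1 n2 hne hd with rfl | rfl
    · exact ⟨k, by omega, rfl⟩
    · exact ⟨k + 1 + 1, by omega, rfl⟩
  exact ⟨key b hb, key c hc⟩

theorem ebpK {C : Config} (hlin : C.IsLinear) {m : ℕ} {vc : ℕ → C.V} (h : C.IsEBPCand m vc)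
    (a b c : C.V) (ha : a ∈ C.ebpSet m vc) (hb : C.graph.Adj a b) (hc : C.graph.Adj a c)
    (hbc : b ≠ c) (hb0 : C.adjw b ≠ 0) : c ∈ C.ebpSet m vc := by
  rcases ebp_nb hlin h ha hb hc hbc with h1 | ⟨p, q, h1, h2, h3, h4, h5, h6⟩
  · exact h1.2
  · rcases nbr_of hlin hb hc hbc h2 with rfl | rfl
    · exact absurd h3 hb0
    · exact h1

theorem ebpK2 {C : Config} (hlin : C.IsLinear) {m : ℕ} {vc : ℕ → C.V} (h : C.IsEBPCand m vc)
    (a b c d : C.V) (ha : a ∈ C.ebpSet m vc) (hb : C.graph.Adj a b) (hc : C.graph.Adj a c)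
    (hbc : b ≠ c) (hd : C.graph.Adj b d) (hda : d ≠ a) (hd0 : C.adjw d ≠ 0) :
    c ∈ C.ebpSet m vc := by
  rcases ebp_nb hlin h ha hb hc hbc with h1 | ⟨p, q, h1, h2, h3, h4, h5, h6⟩
  · exact h1.2
  · rcases nbr_of hlin hb hc hbc h2 with rfl | rfl
    · rcases nbr_of hlin hb.symm h4 h5.symm hd with rfl | rfl
      · exact absurd rfl hda
      · exact absurd h6 hd0
    · exact h1

theorem bad_pos {C : Config} (hlin : C.IsLinear) {y b : C.V} (hy : C.IsBad y)
    (hb : C.graph.Adj y b) : 0 < C.adjw b := by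
  obtain ⟨u, v, h1, h2, h3, h4, h5⟩ := hy
  rcases nbr_of hlin h2 h3 h1 hb with rfl | rfl <;> assumption

theorem flags : ∀ p ∈ badPatterns, ∀ i : Fin p.length, (p.get i).2 = true →
    0 < i.val ∧ i.val + 1 < p.length := by
  decide

theorem bad_mem {C : Config} (hlin : C.IsLinear) (hwc : C.WorkingConditions) {m : ℕ}
    {vc : ℕ → C.V} (h : C.IsEBPCand m vc) {y : C.V} (hy : C.IsBad y) :
    y ∈ C.ebpSet m vc ∧ ∀ b, C.graph.Adj y b → b ∈ C.ebpSet m vc := by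
  obtain ⟨p, hp, mb, vb, hb⟩ := hwc.2.2.2.2.2.2.2 ⟨y, hy⟩
  have hm := h.2.1 p hp mb vb hb
  obtain ⟨⟨hinj, hadj⟩, hlen, -, hbad⟩ := hb
  obtain ⟨⟨i, hi⟩, hf, rfl⟩ := (hbad y).1 hy
  have hfl := flags p hp ⟨i, hi⟩ hf
  simp only at hfl
  obtain ⟨k, rfl⟩ : ∃ k, i = k + 1 := ⟨i - 1, by omega⟩
  refine ⟨hm (k + 1) (by omega), fun b hb => ?_⟩
  have n1 := (hadj k (by omega)).symm
  have n2 := hadj (k + 1) (by omega)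
  have hne : vb k ≠ vb (k + 1 + 1) := fun hh => by
    have := hinj k (by omega) (k + 1 + 1) (by omega) hh
    omega
  rcases nbr_of hlin n1 n2 hne hb with rfl | rfl
  · exact hm k (by omega)
  · exact hm (k + 1 + 1) (by omega)

theorem sq4 {N : ℕ} (a : Fin N → ℤ) {i j k l : Fin N} (h : i ≠ j) (h1 : i ≠ k) (h2 : j ≠ k)
    (h3 : i ≠ l) (h4 : j ≠ l) (h5 : k ≠ l) :
    a i * a i + a j * a j + a k * a k + a l * a l ≤ dot a a := by
  have h6 : ∑ n ∈ ({i, j, k, l} : Finset (Fin N)), a n * a n ≤ dot a a :=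
    Finset.sum_le_sum_of_subset_of_nonneg (Finset.subset_univ _)
      (fun n _ _ => mul_self_nonneg _)
  rw [Finset.sum_insert (by simp [h, h1, h3]), Finset.sum_insert (by simp [h2, h4]),
    Finset.sum_insert (by simp [h5]), Finset.sum_singleton] at h6
  linarith

theorem sq2 {N : ℕ} (a : Fin N → ℤ) {i j : Fin N} (h : i ≠ j) :
    a i * a i + a j * a j ≤ dot a a := by
  have h6 : ∑ n ∈ ({i, j} : Finset (Fin N)), a n * a n ≤ dot a a :=
    Finset.sum_le_sum_of_subset_of_nonneg (Finset.subset_univ _)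
      (fun n _ _ => mul_self_nonneg _)
  rw [Finset.sum_insert (by simp [h]), Finset.sum_singleton] at h6
  exact h6

theorem sq_pos {n : ℤ} (h : n ≠ 0) : 1 ≤ n * n := by
  have := mul_self_pos.2 h
  omega

theorem sq_le {n : ℤ} (h0 : n ≠ 0) (h : n * n ≤ 2) : n = 1 ∨ n = -1 := by
  have h1 : n ≤ 1 := by nlinarith
  have h2 : -1 ≤ n := by nlinarith
  omega

theorem ex_other {N : ℕ} {a b : Fin N → ℤ} (h : dot a b = 0) {i : Fin N} (ha : a i ≠ 0)
    (hb : b i ≠ 0) : ∃ j, j ≠ i ∧ a j ≠ 0 ∧ b j ≠ 0 := by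
  by_contra hcon
  push Not at hcon
  rw [dot1 a b i ?_] at h
  · exact mul_ne_zero ha hb h
  · intro k hk
    by_cases hak : a k = 0
    · rw [hak, zero_mul]
    · rw [hcon k hk hak, mul_zero]

theorem side {N : ℕ} {z u : Fin N → ℤ} (h : dot z u = 0) (hu : dot u u ≤ 3)
    (hz : ∀ i, z i = 0 ∨ z i = 1) {e f : Fin N} (hef : e ≠ f) (ze : z e = 1) (zf : z f = 1)
    (ue : u e ≠ 0) (uf : u f ≠ 0) : (u e = 1 ∨ u e = -1) ∧ u f = - u e ∧
      ∀ i, i ≠ e → i ≠ f → u i ≠ 0 → z i = 0 := by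
  have hs := sq2 u hef
  have h1 : u e = 1 ∨ u e = -1 := sq_le ue (by have := sq_pos uf; omega)
  have h2 : u f = 1 ∨ u f = -1 := sq_le uf (by have := sq_pos ue; omega)
  have h3 : ∀ i, i ≠ e → i ≠ f → u i ≠ 0 → z i = 0 := by
    intro i hie hif hi
    by_contra hzi
    have hzi : z i = 1 := (hz i).resolve_left hzi
    have hn := norm3 u hef hie.symm hif.symm
    have hrest : ∀ l, l ≠ e → l ≠ f → l ≠ i → z l * u l = 0 := by
      intro l a b c
      have hn := norm4 u hef hie.symm hif.symm a.symm b.symm c.symm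
      have : u l = 0 := by omega
      rw [this, mul_zero]
    rw [dot3 z u hef hie.symm hif.symm hrest, ze, zf, hzi] at h
    omega
  refine ⟨h1, ?_, h3⟩
  rw [dot2 z u hef ?_, ze, zf] at h
  · omega
  · intro l a b
    by_cases hl : u l = 0
    · rw [hl, mul_zero]
    · rw [h3 l a b hl, zero_mul]

set_option maxHeartbeats 1000000 in
theorem core {C : Config} (hlin : C.IsLinear) (hwc : C.WorkingConditions) {N : ℕ}
    {φ : C.V → Fin N → ℤ} (hφ : C.IsEmbedding N φ) {S : Set C.V} {x z : C.V}
    (K : ∀ a b c : C.V, a ∈ S → C.graph.Adj a b → C.graph.Adj a c → b ≠ c → C.adjw b ≠ 0 → c ∈ S)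
    (K2 : ∀ a b c d : C.V, a ∈ S → C.graph.Adj a b → C.graph.Adj a c → b ≠ c →
      C.graph.Adj b d → d ≠ a → C.adjw d ≠ 0 → c ∈ S)
    (B1 : ∀ y, C.IsBad y → y ∈ S) (B2 : ∀ y, C.IsBad y → ∀ b, C.graph.Adj y b → b ∈ S)
    (F : ∀ a ∈ S, ∀ b ∈ S, a ≠ b → ¬ C.graph.Adj a b →
      (∀ y, C.IsBad y → y ≠ x → C.graph.Adj y a → C.graph.Adj y b → False) →
      ∀ i, φ a i = 0 ∨ φ b i = 0)
    (G : ∀ a ∈ S, ∀ b ∈ S, C.graph.Adj a b → ∃ i, φ a i ≠ 0 ∧ φ b i ≠ 0 ∧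
      ∀ j, φ a j ≠ 0 → φ b j ≠ 0 → j = i)
    (hx : C.IsBad x) (hwx : C.adjw x = 0) (hzx : z ≠ x) (nzx : ¬ C.graph.Adj z x)
    (hnn : ∀ i, 0 ≤ φ z i) (hs : ∃ i, φ z i ≠ 0 ∧ φ x i ≠ 0) : False := by
  obtain ⟨hI, hII, hII', -, hIV, -, hVI, -⟩ := hwc
  have xS := B1 x hx
  have sfact : ∀ a ∈ S, a ≠ x → ¬ C.graph.Adj a x → ∀ i, φ a i = 0 ∨ φ x i = 0 := by
    intro a ha hax hax'
    refine F a ha x xS hax hax' ?_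
    intro y hy _ _ hyx
    have := bad_pos hlin hy hyx
    omega
  have zS : z ∉ S := by
    intro hz
    obtain ⟨i, h1, h2⟩ := hs
    rcases sfact z hz hzx nzx i with h | h
    · exact h1 h
    · exact h2 h
  have zne : ∀ a ∈ S, z ≠ a := by
    rintro a ha rfl; exact zS ha
  have hx' := hx
  obtain ⟨u, v, huv, xu, xv, pu, pv⟩ := hx
  have uS := B2 x hx' u xu
  have vS := B2 x hx' v xv
  have wx : C.w x = 2 := by
    have h1 := two_le_deg xu xv huv
    have h2 := hlin.1 x
    have h3 := w_eq x
    omega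
  have nuv : ¬ C.graph.Adj u v := fun h => no3 hlin xu h xv.symm
  have duv : ∀ i, φ u i = 0 ∨ φ v i = 0 := by
    refine F u uS v vS huv nuv ?_
    intro y hy hyx h1 h2
    exact no4 hlin xu h1.symm h2 xv.symm hyx.symm huv
  obtain ⟨e1, u1, x1, -⟩ := G u uS x xS xu.symm
  obtain ⟨e2, v2, x2, -⟩ := G v vS x xS xv.symm
  have d12 : e1 ≠ e2 := by
    rintro rfl
    rcases duv e1 with h | h
    · exact u1 h
    · exact v2 h
  have hxx := dself hφ x
  have xs : ∀ i, i ≠ e1 → i ≠ e2 → φ x i = 0 := by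
    intro i a b
    have hn := norm3 (φ x) d12 a.symm b.symm
    rw [hxx] at hn
    omega
  have x1' : φ x e1 = 1 ∨ φ x e1 = -1 := by
    have hn := norm2 (φ x) d12
    rw [hxx] at hn
    omega
  have x2' : φ x e2 = 1 ∨ φ x e2 = -1 := by
    have hn := norm2 (φ x) d12
    rw [hxx] at hn
    omega
  have hzx0 := dzero hφ hzx nzx
  rw [dot2 _ _ d12 (fun l a b => by rw [xs l a b, mul_zero])] at hzx0
  have hz12 : φ z e1 ≠ 0 ∨ φ z e2 ≠ 0 := by
    obtain ⟨i, h1, h2⟩ := hs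
    by_cases hi1 : i = e1
    · left; rwa [← hi1]
    by_cases hi2 : i = e2
    · right; rwa [← hi2]
    exact absurd (xs i hi1 hi2) h2
  have key : φ x e2 = - φ x e1 ∧ φ z e1 ≠ 0 ∧ φ z e2 ≠ 0 := by
    have n1 := hnn e1
    have n2 := hnn e2
    rcases x1' with h | h <;> rcases x2' with h' | h' <;> rw [h, h'] at hzx0 ⊢ <;> omega
  obtain ⟨x2n, z1, z2⟩ := key
  have nzu : ¬ C.graph.Adj z u := fun h =>
    zS (K2 u x z v uS xu.symm h.symm hzx.symm xv huv.symm (by omega))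
  have nzv : ¬ C.graph.Adj z v := fun h =>
    zS (K2 v x z u vS xv.symm h.symm hzx.symm xu huv (by omega))
  have hzu0 := dzero hφ (zne u uS) nzu
  have hzv0 := dzero hφ (zne v vS) nzv
  obtain ⟨f, d1f, zf, uf⟩ := ex_other hzu0 z1 u1
  obtain ⟨g, d2g, zg, vg⟩ := ex_other hzv0 z2 v2
  have d2f : e2 ≠ f := by
    rintro rfl
    rcases duv e2 with h | h
    · exact uf h
    · exact v2 h
  have d1g : e1 ≠ g := by
    rintro rfl
    rcases duv e1 with h | h
    · exact u1 h
    · exact vg h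
  have dfg : f ≠ g := by
    rintro rfl
    rcases duv f with h | h
    · exact uf h
    · exact vg h
  have hzz := dself hφ z
  have h4 := sq4 (φ z) d12 d1f.symm d2f d1g d2g.symm dfg
  rw [hzz] at h4
  have q1 := sq_pos z1
  have q2 := sq_pos z2
  have q3 := sq_pos zf
  have q4 := sq_pos zg
  have hzw := w_eq z
  have hzd := hlin.1 z
  have hz3 := hII z
  have haz : 2 ≤ C.adjw z := by omega
  have hle : ∀ p : C.V, p ≠ z → C.adjw p ≤ 1 := by
    intro p hp
    by_contra hcon
    exact hp (hII' p z (by omega) (by omega))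
  have hu1 := hle u (zne u uS).symm
  have hv1 := hle v (zne v vS).symm
  have m1 := hnn e1
  have m2 := hnn e2
  have m3 := hnn f
  have m4 := hnn g
  have z1' : φ z e1 = 1 := by
    have := sq_le z1 (by omega)
    omega
  have z2' : φ z e2 = 1 := by
    have := sq_le z2 (by omega)
    omega
  have zf' : φ z f = 1 := by
    have := sq_le zf (by omega)
    omega
  have zg' : φ z g = 1 := by
    have := sq_le zg (by omega)
    omega
  have zle : ∀ i, φ z i = 0 ∨ φ z i = 1 := by
    intro i
    by_cases a1 : i = e1
    · right; rw [a1, z1']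
    by_cases a2 : i = e2
    · right; rw [a2, z2']
    by_cases a3 : i = f
    · right; rw [a3, zf']
    by_cases a4 : i = g
    · right; rw [a4, zg']
    have hn := norm_list (φ z) [e1, e2, f, g, i] (by simp; grind)
    simp only [List.map_cons, List.map_nil, List.sum_cons, List.sum_nil] at hn
    rw [hzz, z1', z2', zf', zg'] at hn
    have := hnn i
    omega
  have wu : dot (φ u) (φ u) ≤ 3 := by
    rw [dself hφ]
    have h1 := w_eq u
    have h2 := hlin.1 u
    omega
  have wv : dot (φ v) (φ v) ≤ 3 := by
    rw [dself hφ]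
    have h1 := w_eq v
    have h2 := hlin.1 v
    omega
  obtain ⟨su1, su2, su3⟩ := side hzu0 wu zle d1f.symm z1' zf' u1 uf
  obtain ⟨sv1, sv2, sv3⟩ := side hzv0 wv zle d2g.symm z2' zg' v2 vg
  have T : ∀ u v : C.V, ∀ f g : Fin N, u ∈ S → v ∈ S → C.graph.Adj x u → C.graph.Adj x v →
      u ≠ v → 0 < C.adjw u → 0 < C.adjw v → φ u f ≠ 0 → φ v g ≠ 0 →
      ∀ t, C.graph.Adj u t → t ≠ x → φ t e1 = 0 ∧ φ t e2 = 0 ∧ φ t g = 0 ∧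
      (∀ i, i ≠ f → φ t f ≠ 0 → φ u i ≠ 0 → φ t i = 0) ∧ t ≠ z ∧ ¬ C.graph.Adj t z ∧
      ∀ t2, C.graph.Adj t t2 → t2 ≠ u → ¬ C.graph.Adj t2 z := by
    clear * - hlin K K2 F G sfact zS zne x1 x2
    intro u v f g uS vS xu xv huv pu pv uf vg t hut htx
    have tS : t ∈ S := K2 u x t v uS xu.symm hut htx.symm xv huv.symm (by omega)
    have ntx : ¬ C.graph.Adj t x := fun h => no3 hlin xu hut h
    have htv : t ≠ v := by
      rintro rfl; exact no3 hlin xu hut xv.symm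
    have ntv : ¬ C.graph.Adj t v := fun h => no4 hlin xu hut h xv.symm htx.symm huv
    have dtv := F t tS v vS htv ntv
      (fun y _ _ h1 h2 => no5 hlin xu hut h1.symm h2 xv.symm)
    refine ⟨(sfact t tS htx ntx e1).resolve_right x1, (sfact t tS htx ntx e2).resolve_right x2,
      (dtv g).resolve_right vg, ?_, (zne t tS).symm, ?_, ?_⟩
    · intro i hif tf ui
      by_contra ti
      obtain ⟨k, -, -, hk⟩ := G u uS t tS hut
      exact hif ((hk i ui ti).trans (hk f uf tf).symm)
    · intro h
      exact zS (K t u z tS hut.symm h (zne u uS).symm (by omega))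
    · intro t2 ht2 htu h
      have t2S : t2 ∈ S := K t u t2 tS hut.symm ht2 htu.symm (by omega)
      exact zS (K2 t2 t z u t2S ht2.symm h (zne t tS).symm hut.symm htu.symm (by omega))
  refine Ctx.absurd' (C := C) (N := N) (φ := φ) (x := x) (u := u) (v := v) (z := z) (e1 := e1)
    (e2 := e2) (f := f) (g := g) ?_
  exact {
    lin := hlin
    emb := hφ
    hI := hI
    hle := hle
    hz3 := hz3
    zbad := fun h => zS (B1 z h)
    zbad' := fun y hy h => zS (B2 y hy z h)
    hIV := fun h => hIV ⟨z, h⟩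
    hVI := hVI _ (by unfold forbiddenPatterns; decide)
    xu := xu
    xv := xv
    huv := huv
    au := by omega
    av := by omega
    zx := hzx
    zu := zne u uS
    zv := zne v vS
    nzx := nzx
    nzu := nzu
    nzv := nzv
    d12 := d12
    d1f := d1f.symm
    d1g := d1g
    d2f := d2f
    d2g := d2g.symm
    dfg := dfg
    z1 := z1'
    z2 := z2'
    zf := zf'
    zg := zg'
    zle := zle
    xs := xs
    x1 := x1
    x2 := x2n
    u1 := su1
    uf := su2
    v2 := sv1
    vg := sv2
    duv := duv
    uz := su3
    vz := sv3
    tu := T u v f g uS vS xu xv huv pu pv uf vg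
    tv := T v u g f vS uS xv xu huv.symm pv pu vg uf }

theorem card_one {N : ℕ} {a b : Fin N → ℤ} (h : (supp a ∩ supp b).card = 1) :
    ∃ i, a i ≠ 0 ∧ b i ≠ 0 ∧ ∀ j, a j ≠ 0 → b j ≠ 0 → j = i := by
  obtain ⟨i, hi⟩ := Finset.card_eq_one.1 h
  have key : ∀ j, (a j ≠ 0 ∧ b j ≠ 0) ↔ j = i := by
    intro j
    have : j ∈ supp a ∩ supp b ↔ j ∈ ({i} : Finset (Fin N)) := by rw [hi]
    simpa [supp] using this
  exact ⟨i, ((key i).2 rfl).1, ((key i).2 rfl).2, fun j h1 h2 => (key j).1 ⟨h1, h2⟩⟩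

theorem card_zero {N : ℕ} {a b : Fin N → ℤ} (h : (supp a ∩ supp b).card = 0) (i : Fin N) :
    a i = 0 ∨ b i = 0 := by
  rw [Finset.card_eq_zero] at h
  by_contra hcon
  push Not at hcon
  have : i ∈ supp a ∩ supp b := by simp [supp, hcon.1, hcon.2]
  rw [h] at this
  simp at this

end Config
/-- Lemma 5.5: the case of a bad vertex of adjusted weight `0`. -/
theorem statement6 (C : Config) (hlin : C.IsLinear) (hwc : C.WorkingConditions)
    (hbad : ∃ y : C.V, C.IsBad y) (N : ℕ) (φ : C.V → Fin N → ℤ)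
    (hφ : C.IsEmbedding N φ) (m : ℕ) (vc : ℕ → C.V) (hebp : C.IsExtBadPart m vc)
    (x : C.V) (hx : C.IsBad x) (hwx : C.adjw x = 0)
    (hstd : C.IsStandardOn N φ (C.ebpSet m vc) ∨
      ∃ y : C.V, C.IsBad y ∧ y ≠ x ∧ C.IsSemiStandardAtOn N φ y (C.ebpSet m vc))
    (v : C.V) (hvx : v ≠ x) (hsupp : (supp (φ v) ∩ supp (φ x)).Nonempty) :
    C.graph.Adj v x := by


  by_contra nzx
  have hc := hebp.1
  set S := C.ebpSet m vc with hS
  have F : ∀ a ∈ S, ∀ b ∈ S, a ≠ b → ¬ C.graph.Adj a b →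
      (∀ y, C.IsBad y → y ≠ x → C.graph.Adj y a → C.graph.Adj y b → False) →
      ∀ i, φ a i = 0 ∨ φ b i = 0 := by
    intro a ha b hb hab nab hy
    apply Config.card_zero
    rcases hstd with h | ⟨y, hyb, hyx, h⟩
    · have := h a ha b hb
      rw [if_neg hab, if_neg nab] at this
      exact_mod_cast this
    · have := h.1 a ha b hb
      rw [if_neg hab, if_neg nab, if_neg (fun hh => hy y hyb hyx hh.1 hh.2)] at this
      exact_mod_cast this
  have G : ∀ a ∈ S, ∀ b ∈ S, C.graph.Adj a b → ∃ i, φ a i ≠ 0 ∧ φ b i ≠ 0 ∧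
      ∀ j, φ a j ≠ 0 → φ b j ≠ 0 → j = i := by
    intro a ha b hb hab
    apply Config.card_one
    rcases hstd with h | ⟨y, hyb, hyx, h⟩
    · have := h a ha b hb
      rw [if_neg hab.ne, if_pos hab] at this
      exact_mod_cast this
    · have := h.1 a ha b hb
      rw [if_neg hab.ne, if_pos hab] at this
      exact_mod_cast this
  have hs : ∃ i, φ v i ≠ 0 ∧ φ x i ≠ 0 := by
    obtain ⟨i, hi⟩ := hsupp
    exact ⟨i, by simpa [supp] using hi⟩
  let s : Fin N → ℤ := fun i => if φ v i < 0 then -1 else 1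
  have ss : ∀ i, s i * s i = 1 := by
    intro i; simp only [s]; split_ifs <;> norm_num
  have s0 : ∀ i, s i ≠ 0 := by
    intro i h
    have := ss i
    rw [h] at this
    norm_num at this
  have e0 : ∀ (p : C.V) (i : Fin N), s i * φ p i = 0 ↔ φ p i = 0 := by
    intro p i; simp [s0 i]
  refine Config.core (φ := fun p i => s i * φ p i) (S := S) (x := x) (z := v) hlin hwc ?_
    (Config.ebpK hlin hc) (Config.ebpK2 hlin hc) (fun y hy => (Config.bad_mem hlin hwc hc hy).1)
    (fun y hy => (Config.bad_mem hlin hwc hc hy).2) ?_ ?_ hx hwx hvx nzx ?_ ?_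
  · intro a b
    rw [← hφ a b]
    unfold dot
    refine Finset.sum_congr rfl fun i _ => ?_
    linear_combination (φ a i * φ b i) * ss i
  · intro a ha b hb h1 h2 h3 i
    rw [e0, e0]
    exact F a ha b hb h1 h2 h3 i
  · intro a ha b hb hab
    obtain ⟨i, h1, h2, h3⟩ := G a ha b hb hab
    refine ⟨i, by rwa [Ne, e0], by rwa [Ne, e0], fun j h4 h5 => h3 j ?_ ?_⟩
    · rwa [Ne, e0] at h4
    · rwa [Ne, e0] at h5
  · intro i
    simp only [s]
    split_ifs <;> omega
  · obtain ⟨i, h1, h2⟩ := hs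
    exact ⟨i, by rwa [Ne, e0], by rwa [Ne, e0]⟩

end LensPaper
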